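/- Let d ≥ 2 and 1 ≤ d₁ ≤ d be integers and let C > 0 be a real constant. There exist constants A > 0, B > 0, and n₀ such that for every integer k with n = 2^k ≥ n₀ the following holds. For 1 ≤ i ≤ k and i − 1 ≤ j ≤ k set s_j = n/2^{j−1}, j₀(i) = (1/d)·log₂ n + (1 − d₁/d)·(i − 1) − (1 + 1/d)·log₂ log₂ n − B, and Δ_j^i = A · (1 + |j − j₀(i)|)^{−2} · n^{1/2 − 1/(2d)} · 2^{−(1/2 − d₁/(2d))·(i−1)} · (log₂ n)^{1/2 + 1/(2d)}. Then ∑_{i=1}^{k} ∑_{j=i−1}^{k} C · j^d · 2^{jd} · 2^{−(d−d₁)(i−1)} · exp(−(Δ_j^i)² / (16·s_j)) ≤ n/16. -/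

import Mathlib

/-- The index `j₀(i)` at which the entropy summands peak:
`j₀ = (1/d)·log₂ n + (1 − d₁/d)·(i − 1) − (1 + 1/d)·log₂ log₂ n − B`. -/
noncomputable def jZero (B : ℝ) (d d₁ : ℕ) (n : ℝ) (i : ℕ) : ℝ :=
  (1 / (d : ℝ)) * Real.logb 2 n + (1 - (d₁ : ℝ) / (d : ℝ)) * ((i : ℝ) - 1) -
    (1 + 1 / (d : ℝ)) * Real.logb 2 (Real.logb 2 n) - B

/-- The size-sensitive discrepancy parameter
`Δ_j^i = A · (1 + |j − j₀(i)|)^{−2} · n^{1/2 − 1/(2d)} · 2^{−(1/2 − d₁/(2d))·(i−1)} ·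
(log₂ n)^{1/2 + 1/(2d)}`. -/
noncomputable def Delta (A B : ℝ) (d d₁ : ℕ) (n : ℝ) (i j : ℕ) : ℝ :=
  A / (1 + |(j : ℝ) - jZero B d d₁ n i|) ^ 2 *
    n ^ ((1 : ℝ) / 2 - 1 / (2 * (d : ℝ))) *
    (2 : ℝ) ^ (-((1 : ℝ) / 2 - (d₁ : ℝ) / (2 * (d : ℝ))) * ((i : ℝ) - 1)) *
    Real.logb 2 n ^ ((1 : ℝ) / 2 + 1 / (2 * (d : ℝ)))

lemma peak_bound (d : ℕ) (h0 : 1 ≤ d) : ∃ K : ℝ, 0 < K ∧ ∀ t : ℝ,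
    (2:ℝ) ^ (t * d) * Real.exp (-((2:ℝ) ^ t / (1 + |t|) ^ 4)) ≤ K * (2:ℝ) ^ (-|t|) := by
  refine ⟨((2 * (d + 1)).factorial : ℝ) * (16 ^ 4) ^ (2 * (d + 1)) + 1, by positivity, ?_⟩
  intro t
  have h3 : (0:ℝ) < (2:ℝ) ^ (-|t|) := by positivity
  have h4 : (0:ℝ) ≤ ((2 * (d + 1)).factorial : ℝ) * (16 ^ 4) ^ (2 * (d + 1)) := by positivity
  rcases le_total t 0 with ht | ht
  · have h1 : (2:ℝ) ^ (t * d) ≤ (2:ℝ) ^ (-|t|) := by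
      apply Real.rpow_le_rpow_of_exponent_le (by norm_num)
      rw [abs_of_nonpos ht]
      have : (1:ℝ) ≤ d := by exact_mod_cast h0
      nlinarith
    have h2 : Real.exp (-((2:ℝ) ^ t / (1 + |t|) ^ 4)) ≤ 1 := by
      rw [Real.exp_le_one_iff]
      have : 0 ≤ (2:ℝ) ^ t / (1 + |t|) ^ 4 := by positivity
      linarith
    calc _ ≤ (2:ℝ) ^ (-|t|) * 1 := by gcongr
      _ ≤ _ := by nlinarith [mul_nonneg h4 h3.le]
  · rw [abs_of_nonneg ht] at *
    have hu : (1 + t) ≤ 16 * (2:ℝ) ^ (t / 8) := by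
      have e : (2:ℝ) ^ (t / 8) = Real.exp (Real.log 2 * (t / 8)) :=
        Real.rpow_def_of_pos (by norm_num) _
      have := Real.add_one_le_exp (Real.log 2 * (t / 8))
      have := Real.log_two_gt_d9
      rw [e]; nlinarith
    have hu4 : (1 + t) ^ 4 ≤ 16 ^ 4 * (2:ℝ) ^ (t / 2) := by
      calc (1 + t) ^ 4 ≤ (16 * (2:ℝ) ^ (t / 8)) ^ 4 := by gcongr
        _ = _ := by
          rw [mul_pow, ← Real.rpow_natCast ((2:ℝ) ^ (t / 8)), ← Real.rpow_mul (by norm_num)]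
          congr 2; push_cast; ring
    have hy : (2:ℝ) ^ (t / 2) / 16 ^ 4 ≤ (2:ℝ) ^ t / (1 + t) ^ 4 := by
      rw [div_le_div_iff₀ (by norm_num) (by positivity)]
      have : (2:ℝ) ^ t = (2:ℝ) ^ (t / 2) * (2:ℝ) ^ (t / 2) := by
        rw [← Real.rpow_add (by norm_num)]; congr 1; ring
      rw [this, mul_assoc]
      gcongr
      linarith
    have hE : Real.exp (-((2:ℝ) ^ t / (1 + t) ^ 4)) ≤
        ((2 * (d + 1)).factorial : ℝ) * (16 ^ 4) ^ (2 * (d + 1)) * (2:ℝ) ^ (-(t * (d + 1))) := by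
      have hp := Real.pow_div_factorial_le_exp ((2:ℝ) ^ (t / 2) / 16 ^ 4) (by positivity)
        (2 * (d + 1))
      have e2 : ((2:ℝ) ^ (t / 2)) ^ (2 * (d + 1)) = (2:ℝ) ^ (t * (d + 1)) := by
        rw [← Real.rpow_natCast, ← Real.rpow_mul (by norm_num)]
        congr 1; push_cast; ring
      rw [div_pow, e2] at hp
      have hp2 := hp.trans (Real.exp_le_exp.mpr hy)
      rw [Real.exp_neg, Real.rpow_neg (by norm_num)]
      refine (inv_anti₀ (by positivity) hp2).trans (le_of_eq ?_)
      field_simp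
    calc _ ≤ (2:ℝ) ^ (t * d) * (((2 * (d + 1)).factorial : ℝ) * (16 ^ 4) ^ (2 * (d + 1)) *
            (2:ℝ) ^ (-(t * (d + 1)))) := by gcongr
      _ = ((2 * (d + 1)).factorial : ℝ) * (16 ^ 4) ^ (2 * (d + 1)) *
            ((2:ℝ) ^ (t * d) * (2:ℝ) ^ (-(t * (d + 1)))) := by ring
      _ = ((2 * (d + 1)).factorial : ℝ) * (16 ^ 4) ^ (2 * (d + 1)) * (2:ℝ) ^ (-t) := by
        rw [← Real.rpow_add (by norm_num)]; congr 2; ring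
      _ ≤ _ := by nlinarith

lemma sum_bound : ∃ M : ℝ, 0 < M ∧ ∀ (x : ℝ) (s : Finset ℕ),
    ∑ j ∈ s, (2:ℝ) ^ (-|(j:ℝ) - x|) ≤ M := by
  have hs : Summable (fun m : ℤ => ((1:ℝ) / 2) ^ m.natAbs) := by
    apply Summable.of_nat_of_neg
    · simpa using summable_geometric_two
    · simpa using summable_geometric_two
  refine ⟨2 * (∑' m : ℤ, ((1:ℝ) / 2) ^ m.natAbs) + 1, ?_, ?_⟩
  · have : 0 ≤ ∑' m : ℤ, ((1:ℝ) / 2) ^ m.natAbs := tsum_nonneg fun _ => by positivity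
    linarith
  intro x s
  have h1 : ∀ j ∈ s, (2:ℝ) ^ (-|(j:ℝ) - x|) ≤ 2 * ((1:ℝ) / 2) ^ ((j:ℤ) - ⌊x⌋).natAbs := by
    intro j _
    have e : 2 * ((1:ℝ) / 2) ^ ((j:ℤ) - ⌊x⌋).natAbs = (2:ℝ) ^ (1 - |(j:ℝ) - ⌊x⌋|) := by
      rw [Real.rpow_sub (by norm_num), Real.rpow_one]
      have : |(j:ℝ) - ⌊x⌋| = ((((j:ℤ) - ⌊x⌋).natAbs : ℕ) : ℝ) := by
        rw [Nat.cast_natAbs]; push_cast; rfl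
      rw [this, Real.rpow_natCast]
      simp [div_eq_mul_inv]
    rw [e]
    apply Real.rpow_le_rpow_of_exponent_le (by norm_num)
    have a := abs_add_le ((j:ℝ) - x) (x - ⌊x⌋)
    have b : |x - ⌊x⌋| ≤ 1 := by
      rw [abs_le]; constructor <;> linarith [Int.floor_le x, Int.lt_floor_add_one x]
    have c : (j:ℝ) - x + (x - ⌊x⌋) = j - ⌊x⌋ := by ring
    rw [c] at a; linarith
  have inj : Function.Injective (fun j : ℕ => (j:ℤ) - ⌊x⌋) := by
    intro a b h; simpa using h
  have h2 : ∑ j ∈ s, ((1:ℝ) / 2) ^ ((j:ℤ) - ⌊x⌋).natAbs ≤ ∑' m : ℤ, ((1:ℝ) / 2) ^ m.natAbs := by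
    have e := Finset.sum_map s ⟨_, inj⟩ (fun m : ℤ => ((1:ℝ) / 2) ^ m.natAbs)
    refine (le_of_eq e.symm).trans ?_
    exact hs.sum_le_tsum _ fun _ _ => by positivity
  calc _ ≤ ∑ j ∈ s, 2 * ((1:ℝ) / 2) ^ ((j:ℤ) - ⌊x⌋).natAbs := Finset.sum_le_sum h1
    _ ≤ _ := by rw [← Finset.mul_sum]; linarith

lemma weight_eq (B : ℝ) (d d₁ k i j : ℕ) (hd : 2 ≤ d) (hd₁d : d₁ ≤ d) (hk : 1 ≤ k)
    (hi : 1 ≤ i) :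
    (2:ℝ) ^ (j * d) / 2 ^ ((d - d₁) * (i - 1)) =
      2 ^ k * (2:ℝ) ^ (-(B * d)) / (k:ℝ) ^ (d + 1) *
        (2:ℝ) ^ (((j:ℝ) - jZero B d d₁ ((2:ℝ) ^ k) i) * d) := by
  have hkpos : (0:ℝ) < k := by exact_mod_cast hk
  have hd0 : (d:ℝ) ≠ 0 := by positivity
  have hl : Real.logb 2 ((2:ℝ) ^ k) = k := by
    rw [← Real.rpow_natCast, Real.logb_rpow (by norm_num) (by norm_num)]
  have hkl : (k:ℝ) = (2:ℝ) ^ (Real.logb 2 k) :=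
    (Real.rpow_logb (by norm_num) (by norm_num) hkpos).symm
  unfold jZero
  rw [hl]
  generalize Real.logb 2 (k:ℝ) = l at *
  have e1 : (k:ℝ) ^ (d + 1) = (2:ℝ) ^ (l * (d + 1)) := by
    rw [hkl, ← Real.rpow_natCast, ← Real.rpow_mul (by norm_num)]; push_cast; rfl
  rw [e1, ← Real.rpow_natCast 2 (j * d), ← Real.rpow_natCast 2 ((d - d₁) * (i - 1)),
    ← Real.rpow_natCast 2 k, ← Real.rpow_sub (by norm_num), ← Real.rpow_add (by norm_num),
    ← Real.rpow_sub (by norm_num), ← Real.rpow_add (by norm_num)]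
  congr 1
  push_cast [Nat.cast_sub hd₁d, Nat.cast_sub hi]
  field_simp
  ring

lemma expo_eq (B : ℝ) (d d₁ k i j : ℕ) (hd : 2 ≤ d) (hk : 1 ≤ k) :
    -(Delta ((2:ℝ) ^ ((5 + B) / 2)) B d d₁ ((2 : ℝ) ^ k) i j) ^ 2 /
            (16 * ((2 : ℝ) ^ k / (2 : ℝ) ^ ((j : ℝ) - 1))) =
      -((2:ℝ) ^ ((j:ℝ) - jZero B d d₁ ((2:ℝ) ^ k) i) /
        (1 + |(j:ℝ) - jZero B d d₁ ((2:ℝ) ^ k) i|) ^ 4) := by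
  have hkpos : (0:ℝ) < k := by exact_mod_cast hk
  have hd0 : (d:ℝ) ≠ 0 := by positivity
  have hl : Real.logb 2 ((2:ℝ) ^ k) = k := by
    rw [← Real.rpow_natCast, Real.logb_rpow (by norm_num) (by norm_num)]
  have hkl : (k:ℝ) = (2:ℝ) ^ (Real.logb 2 k) :=
    (Real.rpow_logb (by norm_num) (by norm_num) hkpos).symm
  unfold Delta
  have ht : jZero B d d₁ ((2:ℝ) ^ k) i = (1 / (d : ℝ)) * k +
      (1 - (d₁ : ℝ) / (d : ℝ)) * ((i : ℝ) - 1) - (1 + 1 / (d : ℝ)) * Real.logb 2 k - B := by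
    unfold jZero; rw [hl]
  have hu : 0 < 1 + |(j:ℝ) - jZero B d d₁ ((2:ℝ) ^ k) i| := by positivity
  generalize 1 + |(j:ℝ) - jZero B d d₁ ((2:ℝ) ^ k) i| = u at *
  rw [ht, hl]
  have e1 : (k:ℝ) ^ ((1 : ℝ) / 2 + 1 / (2 * (d : ℝ))) =
      (2:ℝ) ^ (Real.logb 2 k * ((1 : ℝ) / 2 + 1 / (2 * (d : ℝ)))) := by
    rw [Real.rpow_mul (by norm_num), ← hkl]
  have e2 : ((2:ℝ) ^ k) ^ ((1 : ℝ) / 2 - 1 / (2 * (d : ℝ))) =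
      (2:ℝ) ^ ((k:ℝ) * ((1 : ℝ) / 2 - 1 / (2 * (d : ℝ)))) := by
    rw [Real.rpow_mul (by norm_num), Real.rpow_natCast]
  rw [e1, e2]
  generalize Real.logb 2 (k:ℝ) = l
  have e3 : (16:ℝ) = (2:ℝ) ^ (4:ℝ) := by norm_num
  rw [neg_div, neg_inj, e3, ← Real.rpow_natCast 2 k, ← Real.rpow_sub (by norm_num),
    ← Real.rpow_add (by norm_num), div_mul_eq_mul_div, div_mul_eq_mul_div, div_mul_eq_mul_div,
    ← Real.rpow_add (by norm_num), ← Real.rpow_add (by norm_num), ← Real.rpow_add (by norm_num),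
    div_pow, ← Real.rpow_mul_natCast (by norm_num), div_right_comm, ← Real.rpow_sub (by norm_num),
    ← pow_mul]
  congr 2
  push_cast
  field_simp
  ring

/-- the entropy-sum inequality.
Let `d ≥ 2`, `1 ≤ d₁ ≤ d` be integers and `C > 0`. There exist constants `A, B > 0` and
`n₀` such that for every `k` with `n = 2^k ≥ n₀`, with `s_j = n/2^{j−1}` and `Δ_j^i` as
above, `∑_{i=1}^{k} ∑_{j=i−1}^{k} C·j^d·2^{jd}·2^{−(d−d₁)(i−1)}·exp(−(Δ_j^i)²/(16·s_j))
≤ n/16`. -/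
theorem stmt10 (d d₁ : ℕ) (hd : 2 ≤ d) (hd₁ : 1 ≤ d₁) (hd₁d : d₁ ≤ d)
    (C : ℝ) (hC : 0 < C) :
    ∃ A B : ℝ, 0 < A ∧ 0 < B ∧ ∃ n₀ : ℕ, ∀ k : ℕ, n₀ ≤ 2 ^ k →
      ∑ i ∈ Finset.Icc 1 k, ∑ j ∈ Finset.Icc (i - 1) k,
        C * (j : ℝ) ^ d * 2 ^ (j * d) / 2 ^ ((d - d₁) * (i - 1)) *
          Real.exp (-(Delta A B d d₁ ((2 : ℝ) ^ k) i j) ^ 2 /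
            (16 * ((2 : ℝ) ^ k / (2 : ℝ) ^ ((j : ℝ) - 1)))) ≤ (2 : ℝ) ^ k / 16 := by
  obtain ⟨K, hK, hKb⟩ := peak_bound d (by omega)
  obtain ⟨M, hM, hMb⟩ := sum_bound
  obtain ⟨b, hb⟩ := pow_unbounded_of_one_lt (16 * (C * K * M)) (one_lt_two : (1:ℝ) < 2)
  set B : ℝ := (b:ℝ) + 1 with hB
  have hBd : C * K * M * (2:ℝ) ^ (-(B * d)) ≤ 1 / 16 := by
    have h1 : (2:ℝ) ^ (-(B * d)) ≤ (2:ℝ) ^ (-(b:ℝ)) := by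
      apply Real.rpow_le_rpow_of_exponent_le (by norm_num)
      have : (2:ℝ) ≤ d := by exact_mod_cast hd
      have : (0:ℝ) ≤ b := by positivity
      rw [hB]; nlinarith
    rw [Real.rpow_neg (by norm_num) (b:ℝ), Real.rpow_natCast] at h1
    calc _ ≤ C * K * M * ((2:ℝ) ^ b)⁻¹ := by gcongr
      _ ≤ 1 / 16 := by
        rw [← div_eq_mul_inv, div_le_div_iff₀ (by positivity) (by norm_num)]; linarith
  refine ⟨(2:ℝ) ^ ((5 + B) / 2), B, by positivity, by positivity, 0, ?_⟩
  intro k _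
  rcases Nat.eq_zero_or_pos k with rfl | hk
  · simp
  have hkpos : (0:ℝ) < k := by exact_mod_cast hk
  have hterm : ∀ i ∈ Finset.Icc 1 k, ∑ j ∈ Finset.Icc (i - 1) k,
        C * (j : ℝ) ^ d * 2 ^ (j * d) / 2 ^ ((d - d₁) * (i - 1)) *
          Real.exp (-(Delta ((2:ℝ) ^ ((5 + B) / 2)) B d d₁ ((2 : ℝ) ^ k) i j) ^ 2 /
            (16 * ((2 : ℝ) ^ k / (2 : ℝ) ^ ((j : ℝ) - 1)))) ≤ (2:ℝ) ^ k / 16 / k := by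
    intro i hi
    rw [Finset.mem_Icc] at hi
    have hj : ∀ j ∈ Finset.Icc (i - 1) k,
        C * (j : ℝ) ^ d * 2 ^ (j * d) / 2 ^ ((d - d₁) * (i - 1)) *
          Real.exp (-(Delta ((2:ℝ) ^ ((5 + B) / 2)) B d d₁ ((2 : ℝ) ^ k) i j) ^ 2 /
            (16 * ((2 : ℝ) ^ k / (2 : ℝ) ^ ((j : ℝ) - 1)))) ≤
        C * K * (2:ℝ) ^ (-(B * d)) * (2 ^ k / k) *
          (2:ℝ) ^ (-|(j:ℝ) - jZero B d d₁ ((2:ℝ) ^ k) i|) := by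
      intro j hj
      rw [Finset.mem_Icc] at hj
      have hjk : (j:ℝ) ≤ k := by exact_mod_cast hj.2
      rw [expo_eq B d d₁ k i j hd hk, mul_div_assoc, weight_eq B d d₁ k i j hd hd₁d hk hi.1]
      have := hKb ((j:ℝ) - jZero B d d₁ ((2:ℝ) ^ k) i)
      generalize (j:ℝ) - jZero B d d₁ ((2:ℝ) ^ k) i = t at *
      calc _ = C * (j:ℝ) ^ d * (2 ^ k * (2:ℝ) ^ (-(B * d)) / (k:ℝ) ^ (d + 1)) *
            ((2:ℝ) ^ (t * d) * Real.exp (-((2:ℝ) ^ t / (1 + |t|) ^ 4))) := by ring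
        _ ≤ C * (k:ℝ) ^ d * (2 ^ k * (2:ℝ) ^ (-(B * d)) / (k:ℝ) ^ (d + 1)) *
            (K * (2:ℝ) ^ (-|t|)) := by gcongr
        _ = _ := by rw [pow_succ]; field_simp
    refine (Finset.sum_le_sum hj).trans ?_
    rw [← Finset.mul_sum]
    calc _ ≤ C * K * (2:ℝ) ^ (-(B * d)) * (2 ^ k / k) * M := by gcongr; exact hMb _ _
      _ = C * K * M * (2:ℝ) ^ (-(B * d)) * (2 ^ k / k) := by ring
      _ ≤ 1 / 16 * (2 ^ k / k) := by gcongr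
      _ = _ := by ring
  refine (Finset.sum_le_sum hterm).trans (le_of_eq ?_)
  rw [Finset.sum_const, Nat.card_Icc, nsmul_eq_mul]
  simp
  field_simp
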